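/- Let ℓ ≥ 5 be prime and let H be a closed subgroup of SL₂(ℤ_ℓ) whose image under the composite SL₂(ℤ_ℓ) → SL₂(𝔽_ℓ) → PSL₂(𝔽_ℓ) is all of PSL₂(𝔽_ℓ). Then H = SL₂(ℤ_ℓ). -/

import Mathlib

open Matrix

/-- The special linear group over a topological ring carries the subspace topology. -/
instance specialLinearGroupTopology (n : Type*) [DecidableEq n] [Fintype n]
    (R : Type*) [CommRing R] [TopologicalSpace R] :
    TopologicalSpace (Matrix.SpecialLinearGroup n R) :=
  inferInstanceAs (TopologicalSpace {A : Matrix n n R // A.det = 1})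

/-- The composite `SL₂(ℤ_ℓ) → SL₂(𝔽_ℓ) → PSL₂(𝔽_ℓ)` of reduction mod `ℓ` with the projection
onto `PSL₂(𝔽_ℓ) = SL₂(𝔽_ℓ)/{±1}` (the quotient by the centre). -/
noncomputable def toPSL (ℓ : ℕ) [Fact (Nat.Prime ℓ)] :
    Matrix.SpecialLinearGroup (Fin 2) ℤ_[ℓ] →*
      Matrix.SpecialLinearGroup (Fin 2) (ZMod ℓ) ⧸
        Subgroup.center (Matrix.SpecialLinearGroup (Fin 2) (ZMod ℓ)) :=
  (QuotientGroup.mk' (Subgroup.center (Matrix.SpecialLinearGroup (Fin 2) (ZMod ℓ)))).comp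
    (Matrix.SpecialLinearGroup.map (n := Fin 2) (PadicInt.toZMod (p := ℓ)))

theorem aux_pow {R : Type*} [Ring R] (p : ℕ) (hp : p.Prime) (h5 : 5 ≤ p) (n : ℕ) (h u : R)
    (hu : u * u = 0) (hh : (p : R) ^ (n + 1) ∣ h - (1 + (p : R) ^ n * u)) :
    (p : R) ^ (n + 2) ∣ h ^ p - (1 + (p : R) ^ (n + 1) * u) := by
  obtain ⟨v, hv⟩ := hh
  have hc : ∀ (k : ℕ) (x : R), x * (p : R) ^ k = (p : R) ^ k * x := fun k x =>
    ((Nat.cast_commute p x).pow_left k).eq.symm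
  set y : R := (p : R) ^ n * (u + p * v) with hy
  have hh' : h = y + 1 := by
    have : h = (p : R) ^ (n + 1) * v + (1 + (p : R) ^ n * u) := by rw [← hv]; abel
    rw [this, hy, pow_succ]; noncomm_ring
  have hc1 : ∀ x : R, x * (p : R) = p * x := fun x => (Nat.cast_commute p x).eq.symm
  have hy2 : y * y = (p : R) ^ (n + 1) * ((p : R) ^ n * (u * v + v * u + p * (v * v))) := by
    have e1 : (u + p * v) * (u + p * v) = p * (u * v + v * u + p * (v * v)) := by
      have : (u + p * v) * (u + p * v) =
        u * u + (u * p) * v + p * (v * u) + p * ((v * p) * v) := by noncomm_ring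
      rw [this, hu, hc1, hc1]; noncomm_ring
    calc y * y = (p : R) ^ n * (((u + p * v) * (p : R) ^ n) * (u + p * v)) := by
          rw [hy]; simp only [mul_assoc]
      _ = (p : R) ^ n * ((p : R) ^ n * ((u + p * v) * (u + p * v))) := by
          rw [hc]; simp only [mul_assoc]
      _ = (p : R) ^ n * (((p : R) ^ n * p) * (u * v + v * u + p * (v * v))) := by
          rw [e1]; simp only [mul_assoc]
      _ = _ := by
          rw [← pow_succ, ← mul_assoc ((p : R) ^ n) ((p : R) ^ (n + 1)),
            ← mul_assoc ((p : R) ^ (n + 1)) ((p : R) ^ n), ← pow_add, ← pow_add, add_comm]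
  set z : R := (p : R) ^ n * (u * v + v * u + p * (v * v)) with hz
  have hy4 : (p : R) ^ (n + 2) ∣ y ^ 4 := by
    have : y ^ 4 = (p : R) ^ (n + 1) * ((p : R) ^ (n + 1) * (z * z)) := by
      have : y ^ 4 = (y * y) * (y * y) := by noncomm_ring
      rw [this, hy2, mul_assoc, ← mul_assoc z, hc]; simp only [mul_assoc]
    rw [this, ← mul_assoc, ← pow_add]
    exact dvd_mul_of_dvd_left (pow_dvd_pow _ (by omega)) _
  have key : ∀ k, 2 ≤ k → k ≤ p → (p : R) ^ (n + 2) ∣ y ^ k * (p.choose k : R) := by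
    intro k hk2 hkp
    rcases hkp.eq_or_lt with rfl | hlt
    · apply dvd_mul_of_dvd_left
      exact hy4.trans (pow_dvd_pow _ (by omega))
    · obtain ⟨c, hcc⟩ := hp.dvd_choose_self (by omega) hlt
      have : y ^ k = (p : R) ^ (n + 1) * (z * y ^ (k - 2)) := by
        rw [← mul_assoc, ← hy2, ← pow_two, ← pow_add]; congr 1; omega
      rw [hcc, Nat.cast_mul, ← mul_assoc, this, hc1, ← mul_assoc (p : R), ← pow_succ', mul_assoc]
      exact Dvd.intro _ rfl
  have hsum : h ^ p = ∑ k ∈ Finset.range (p + 1), y ^ k * (p.choose k : R) := by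
    rw [hh', (Commute.one_right y).add_pow]; simp
  have hsplit : h ^ p = (∑ k ∈ Finset.range (p - 1), y ^ (k + 2) * (p.choose (k + 2) : R))
      + y * p + 1 := by
    rw [hsum]
    obtain ⟨m, rfl⟩ : ∃ m, p = m + 1 := ⟨p - 1, by omega⟩
    rw [Finset.sum_range_succ', Finset.sum_range_succ']
    simp [add_assoc]
  have hyp : y * p = (p : R) ^ (n + 1) * u + (p : R) ^ (n + 2) * v := by
    rw [hc1, hy, ← mul_assoc, ← pow_succ', mul_add, ← mul_assoc, ← pow_succ]
  have : h ^ p - (1 + (p : R) ^ (n + 1) * u) =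
      (∑ k ∈ Finset.range (p - 1), y ^ (k + 2) * (p.choose (k + 2) : R))
      + (p : R) ^ (n + 2) * v := by
    rw [hsplit, hyp]; abel
  rw [this]
  refine dvd_add (Finset.dvd_sum fun k hk => key _ (by omega) ?_) (Dvd.intro _ rfl)
  have := Finset.mem_range.1 hk
  omega

/-- `A` is congruent mod `ℓ ^ n` to an element of `H`. -/
def AuxApprox (ℓ : ℕ) [Fact (Nat.Prime ℓ)]
    (H : Subgroup (Matrix.SpecialLinearGroup (Fin 2) ℤ_[ℓ])) (n : ℕ)
    (A : Matrix (Fin 2) (Fin 2) ℤ_[ℓ]) : Prop :=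
  ∃ h ∈ H, (ℓ : Matrix (Fin 2) (Fin 2) ℤ_[ℓ]) ^ n ∣ h.1 - A

section
variable {ℓ : ℕ} [Fact (Nat.Prime ℓ)] {H : Subgroup (Matrix.SpecialLinearGroup (Fin 2) ℤ_[ℓ])}

theorem AuxApprox.mul {n : ℕ} {A B : Matrix (Fin 2) (Fin 2) ℤ_[ℓ]}
    (hA : AuxApprox ℓ H n A) (hB : AuxApprox ℓ H n B) : AuxApprox ℓ H n (A * B) := by
  obtain ⟨h, hh, a, ha⟩ := hA
  obtain ⟨k, hk, b, hb⟩ := hB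
  refine ⟨h * k, H.mul_mem hh hk, h.1 * b + a * B, ?_⟩
  have : h.1 * k.1 - A * B = h.1 * (k.1 - B) + (h.1 - A) * B := by noncomm_ring
  rw [Matrix.SpecialLinearGroup.coe_mul, this, ha, hb, mul_add, ← mul_assoc, ← mul_assoc, ← mul_assoc,
    ((Nat.cast_commute ℓ h.1).pow_left n).eq]

theorem AuxApprox.congr {n : ℕ} {A B : Matrix (Fin 2) (Fin 2) ℤ_[ℓ]}
    (hA : AuxApprox ℓ H n A) (hB : (ℓ : Matrix (Fin 2) (Fin 2) ℤ_[ℓ]) ^ n ∣ A - B) :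
    AuxApprox ℓ H n B := by
  obtain ⟨h, hh, ha⟩ := hA
  exact ⟨h, hh, by simpa using dvd_add ha hB⟩

theorem aux_natCast_pow_mul (n : ℕ) (C : Matrix (Fin 2) (Fin 2) ℤ_[ℓ]) (i j : Fin 2) :
    ((ℓ : Matrix (Fin 2) (Fin 2) ℤ_[ℓ]) ^ n * C) i j = (ℓ : ℤ_[ℓ]) ^ n * C i j := by
  have : (ℓ : Matrix (Fin 2) (Fin 2) ℤ_[ℓ]) ^ n * C = ((ℓ : ℤ_[ℓ]) ^ n) • C := by
    rw [← Nat.cast_pow, ← nsmul_eq_mul, ← Nat.cast_pow, Nat.cast_smul_eq_nsmul]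
  rw [this]; simp

theorem aux_dvd {n : ℕ} {A : Matrix (Fin 2) (Fin 2) ℤ_[ℓ]}
    (h : ∀ i j, (ℓ : ℤ_[ℓ]) ^ n ∣ A i j) : (ℓ : Matrix (Fin 2) (Fin 2) ℤ_[ℓ]) ^ n ∣ A := by
  choose C hC using h
  exact ⟨Matrix.of C, by ext i j; rw [aux_natCast_pow_mul, hC]; simp⟩

theorem aux_sign (hsurj : Subgroup.map (toPSL ℓ) H = ⊤)
    (g : Matrix.SpecialLinearGroup (Fin 2) ℤ_[ℓ]) :
    AuxApprox ℓ H 1 g.1 ∨ AuxApprox ℓ H 1 (-g.1) := by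
  have hg : toPSL ℓ g ∈ Subgroup.map (toPSL ℓ) H := by rw [hsurj]; trivial
  obtain ⟨h, hh, he⟩ := hg
  have he2 : (QuotientGroup.mk (Matrix.SpecialLinearGroup.map (n := Fin 2) (PadicInt.toZMod (p := ℓ)) g) :
      _ ⧸ Subgroup.center (Matrix.SpecialLinearGroup (Fin 2) (ZMod ℓ)))
     = QuotientGroup.mk (Matrix.SpecialLinearGroup.map (n := Fin 2) (PadicInt.toZMod (p := ℓ)) h) := he.symm
  rw [QuotientGroup.eq, Matrix.SpecialLinearGroup.mem_center_iff] at he2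
  obtain ⟨r, hr, hrs⟩ := he2
  have hmul : (Matrix.SpecialLinearGroup.map (n := Fin 2) (PadicInt.toZMod (p := ℓ)) h).1 =
      (Matrix.SpecialLinearGroup.map (n := Fin 2) (PadicInt.toZMod (p := ℓ)) g).1 * scalar (Fin 2) r := by
    rw [hrs]
    rw [← Matrix.SpecialLinearGroup.coe_mul]; simp
  have hent : ∀ i j, PadicInt.toZMod (h.1 i j) = PadicInt.toZMod (g.1 i j) * r := by
    intro i j
    have := congrFun (congrFun hmul i) j
    simpa [Matrix.scalar_apply, Matrix.mul_diagonal] using this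
  have hdvd : ∀ x : ℤ_[ℓ], PadicInt.toZMod x = 0 → (ℓ : ℤ_[ℓ]) ^ 1 ∣ x := by
    intro x hx
    have : x ∈ RingHom.ker (PadicInt.toZMod (p := ℓ)) := hx
    rw [PadicInt.ker_toZMod, PadicInt.maximalIdeal_eq_span_p, Ideal.mem_span_singleton] at this
    simpa using this
  have hr' : (r - 1) * (r + 1) = 0 := by
    rw [Fintype.card_fin] at hr
    linear_combination hr
  rcases mul_eq_zero.1 hr' with h1 | h1
  · left
    refine ⟨h, hh, aux_dvd fun i j => hdvd _ ?_⟩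
    rw [Matrix.sub_apply, map_sub, hent]
    linear_combination (PadicInt.toZMod (g.1 i j)) * h1
  · right
    refine ⟨h, hh, aux_dvd fun i j => hdvd _ ?_⟩
    rw [Matrix.sub_apply, map_sub, hent, Matrix.neg_apply, map_neg]
    linear_combination (PadicInt.toZMod (g.1 i j)) * h1

theorem aux_nilp (hℓ : 5 ≤ ℓ) (hsurj : Subgroup.map (toPSL ℓ) H = ⊤) (a b c : ℤ_[ℓ])
    (habc : a * a + b * c = 0) (n : ℕ) :
    AuxApprox ℓ H (n + 1) (1 + (ℓ : Matrix (Fin 2) (Fin 2) ℤ_[ℓ]) ^ n * !![a, b; c, -a]) := by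
  have hp : Nat.Prime ℓ := Fact.out
  have hu : !![a, b; c, -a] * !![a, b; c, -a] = 0 := by
    ext i j
    fin_cases i <;> fin_cases j <;> simp <;>
      first | ring1 | linear_combination habc
  induction n with
  | zero =>
    have h2 : IsUnit ((2 : ℕ) : ℤ_[ℓ]) := by
      rw [PadicInt.isUnit_iff, PadicInt.norm_natCast_eq_one_iff]
      exact (Nat.coprime_primes hp Nat.prime_two).2 (by omega)
    obtain ⟨t, ht⟩ := h2.exists_right_inv
    push_cast at ht
    let g : Matrix.SpecialLinearGroup (Fin 2) ℤ_[ℓ] :=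
      ⟨!![1 + t * a, t * b; t * c, 1 - t * a], by
        rw [Matrix.det_fin_two_of]; linear_combination (-t * t) * habc⟩
    have hgg : g.1 * g.1 = 1 + (ℓ : Matrix (Fin 2) (Fin 2) ℤ_[ℓ]) ^ 0 * !![a, b; c, -a] := by
      ext i j
      fin_cases i <;> fin_cases j <;> simp [g]
      · linear_combination t * t * habc + a * ht
      · linear_combination b * ht
      · linear_combination c * ht
      · linear_combination t * t * habc - a * ht
    rw [← hgg]
    rcases aux_sign hsurj g with h | h
    · exact h.mul h
    · simpa using h.mul h
  | succ n ih =>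
    obtain ⟨h, hh, hd⟩ := ih
    refine ⟨h ^ ℓ, H.pow_mem hh ℓ, ?_⟩
    rw [Matrix.SpecialLinearGroup.coe_pow]
    exact aux_pow ℓ hp hℓ n h.1 _ hu hd

theorem aux_one (hℓ : 5 ≤ ℓ) (hsurj : Subgroup.map (toPSL ℓ) H = ⊤)
    (g : Matrix.SpecialLinearGroup (Fin 2) ℤ_[ℓ]) : AuxApprox ℓ H 1 g.1 := by
  rcases aux_sign hsurj g with h | h
  · exact h
  · have e := aux_nilp hℓ hsurj 0 1 0 (by simp) 0
    have f := aux_nilp hℓ hsurj 0 0 (-1) (by simp) 0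
    have w := (e.mul f).mul e
    have := (w.mul w).mul h
    convert this using 1
    have : ∀ A : Matrix (Fin 2) (Fin 2) ℤ_[ℓ], A = (-1) * (-A) := by intro A; simp
    refine (this g.1).trans ?_
    congr 1
    ext i j
    fin_cases i <;> fin_cases j <;> simp [Matrix.one_fin_two, Matrix.mul_fin_two]

theorem aux_all (hℓ : 5 ≤ ℓ) (hsurj : Subgroup.map (toPSL ℓ) H = ⊤) (n : ℕ)
    (g : Matrix.SpecialLinearGroup (Fin 2) ℤ_[ℓ]) : AuxApprox ℓ H (n + 1) g.1 := by
  have hp : Nat.Prime ℓ := Fact.out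
  induction n with
  | zero => exact aux_one hℓ hsurj g
  | succ n ih =>
    obtain ⟨h, hh, C, hC⟩ := ih
    set w : Matrix (Fin 2) (Fin 2) ℤ_[ℓ] := -(C * (h⁻¹).1) with hw
    have hhi : h.1 * (h⁻¹).1 = 1 := by
      rw [← Matrix.SpecialLinearGroup.coe_mul]; simp
    have hs : (g * h⁻¹).1 = 1 + (ℓ : Matrix (Fin 2) (Fin 2) ℤ_[ℓ]) ^ (n + 1) * w := by
      have : g.1 = h.1 - (ℓ : Matrix (Fin 2) (Fin 2) ℤ_[ℓ]) ^ (n + 1) * C := by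
        rw [← hC]; abel
      rw [Matrix.SpecialLinearGroup.coe_mul, this, sub_mul, hhi, hw, mul_neg, mul_assoc,
        sub_eq_add_neg]
    have hdet := (g * h⁻¹).2
    rw [hs, Matrix.det_fin_two] at hdet
    simp only [Matrix.add_apply, aux_natCast_pow_mul] at hdet
    simp at hdet
    set q : ℤ_[ℓ] := (ℓ : ℤ_[ℓ]) ^ (n + 1) with hq
    have hq0 : q ≠ 0 := pow_ne_zero _ (Nat.cast_ne_zero.2 hp.ne_zero)
    have htr : w 0 0 + w 1 1 = q * (w 0 1 * w 1 0 - w 0 0 * w 1 1) := by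
      apply mul_left_cancel₀ hq0
      linear_combination hdet
    have hqq : (ℓ : ℤ_[ℓ]) ^ (n + 1 + 1) ∣ q * q := by
      rw [hq, ← pow_add]; exact pow_dvd_pow _ (by omega)
    have e1 := aux_nilp hℓ hsurj (w 0 0) (w 0 0) (-w 0 0) (by ring) (n + 1)
    have e2 := aux_nilp hℓ hsurj 0 (w 0 1 - w 0 0) 0 (by ring) (n + 1)
    have e3 := aux_nilp hℓ hsurj 0 0 (w 1 0 + w 0 0) (by ring) (n + 1)
    have hS : AuxApprox ℓ H (n + 1 + 1) (g * h⁻¹).1 := by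
      refine ((e1.mul e2).mul e3).congr ?_
      rw [hs]
      apply aux_dvd
      intro i j
      refine hqq.trans ?_
      have hent : ∀ (u : Matrix (Fin 2) (Fin 2) ℤ_[ℓ]),
          1 + (ℓ : Matrix (Fin 2) (Fin 2) ℤ_[ℓ]) ^ (n + 1) * u =
          !![1 + q * u 0 0, q * u 0 1; q * u 1 0, 1 + q * u 1 1] := by
        intro u
        ext i j
        fin_cases i <;> fin_cases j <;>
          simp only [Matrix.add_apply, aux_natCast_pow_mul] <;> simp [hq]
      simp only [hent, Matrix.mul_fin_two]
      have hw11 : w 1 1 = q * (w 0 1 * w 1 0 - w 0 0 * w 1 1) - w 0 0 := by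
        linear_combination htr
      generalize hd : w 0 1 * w 1 0 - w 0 0 * w 1 1 = d at hw11
      rw [hw11]
      clear_value q
      fin_cases i <;> fin_cases j <;> simp
      · exact ⟨(w 1 0 + w 0 0) * ((w 0 1 - w 0 0) * (1 + q * w 0 0) + w 0 0), by ring⟩
      · exact ⟨w 0 0 * (w 0 1 - w 0 0), by ring⟩
      · exact ⟨-((w 1 0 + w 0 0) * w 0 0 * (1 + q * (w 0 1 - w 0 0))), by ring⟩
      · exact ⟨-(w 0 0 * (w 0 1 - w 0 0)) - d, by ring⟩
    have := hS.mul (B := h.1) ⟨h, hh, by simp⟩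
    rw [← Matrix.SpecialLinearGroup.coe_mul] at this
    simpa using this

end

/-- Let `ℓ ≥ 5` be a prime and `H` a closed subgroup of `SL₂(ℤ_ℓ)` whose image in `PSL₂(𝔽_ℓ)`
under reduction mod `ℓ` is all of `PSL₂(𝔽_ℓ)`.  Then `H = SL₂(ℤ_ℓ)`. -/
theorem closed_subgroup_eq_top_of_surjective_on_PSL
    (ℓ : ℕ) [Fact (Nat.Prime ℓ)] (hℓ : 5 ≤ ℓ)
    (H : Subgroup (Matrix.SpecialLinearGroup (Fin 2) ℤ_[ℓ]))
    (hcl : IsClosed (H : Set (Matrix.SpecialLinearGroup (Fin 2) ℤ_[ℓ])))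
    (hsurj : Subgroup.map (toPSL ℓ) H = ⊤) :
    H = ⊤ := by
  rw [eq_top_iff]
  intro g _
  have hall := fun n => aux_all hℓ hsurj n g
  choose h hh C hC using hall
  have hmem : Filter.Tendsto h Filter.atTop (nhds g) := by
    have hind : Topology.IsInducing
        (fun A : Matrix.SpecialLinearGroup (Fin 2) ℤ_[ℓ] => (A.1 : Matrix (Fin 2) (Fin 2) ℤ_[ℓ])) :=
      Topology.IsInducing.subtypeVal
    refine hind.tendsto_nhds_iff.2 (tendsto_pi_nhds.2 fun i => tendsto_pi_nhds.2 fun j => ?_)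
    have hE : ∀ n, (h n).1 i j - g.1 i j = (ℓ : ℤ_[ℓ]) ^ (n + 1) * C n i j := by
      intro n
      rw [← aux_natCast_pow_mul, ← hC n, Matrix.sub_apply]
    rw [tendsto_iff_norm_sub_tendsto_zero]
    have hp1 : 1 < (ℓ : ℝ) := by exact_mod_cast (by omega : 1 < ℓ)
    have hlim : Filter.Tendsto (fun n : ℕ => ((ℓ : ℝ)⁻¹) ^ (n + 1)) Filter.atTop (nhds 0) :=
      (tendsto_pow_atTop_nhds_zero_of_lt_one (by positivity)
        (inv_lt_one_of_one_lt₀ hp1)).comp (Filter.tendsto_add_atTop_nat 1)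
    refine squeeze_zero (fun _ => norm_nonneg _) (fun n => ?_) hlim
    show ‖(h n).1 i j - g.1 i j‖ ≤ _
    rw [hE, norm_mul, norm_pow, PadicInt.norm_p]
    exact mul_le_of_le_one_right (by positivity) (PadicInt.norm_le_one _)
  exact hcl.mem_of_tendsto hmem (Filter.Eventually.of_forall hh)
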